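/- arXiv:1604.02519 — 10 statements merged into one kernel-verified Lean document; each statement's English description precedes it below -/
import Mathlib

section
/- Let K ≥ 1, let B > 0 and N₀ > 0, and define f(x) = N₀·(2^(x/B) − 1). For each k ∈ {1,…,K} let β_k > 0, h_k > 0, C_k ≥ 0, P_k ≥ 0 and R_k ≥ 0 be real constants. Then the function ((ℓ_1,…,ℓ_K), (t_1,…,t_K)) ↦ Σ_{k=1}^K β_k·[ (t_k/h_k²)·f(ℓ_k/t_k) + (R_k − ℓ_k)·C_k·P_k ] is convex on the convex set {(ℓ, t) ∈ ℝ^K × ℝ^K : t_k > 0 for all k}. -/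
/-!
The term `t * f (ℓ / t)` is the perspective of the convex function `f`, and the perspective of a
convex function is jointly convex on `{t > 0}` (`ConvexOn.perspective`). For `f` this applies
because `x ↦ 2 ^ (x / B)` is the exponential precomposed with a linear map
(`convexOn_offloadingPower`). The remaining part `(R k - ℓ k) * C k * P k` is affine, and sums
with the nonnegative weights `β k` and `1 / (h k) ^ 2` preserve convexity.
-/

open Finset

/-- The weights `a * s / (a * s + b * t)` and `b * t / (a * s + b * t)` express the ratio
`(a * x + b * y) / (a * s + b * t)` as a convex combination of `x / s` and `y / t`. -/
theorem ConvexOn.perspective {g : ℝ → ℝ} (hg : ConvexOn ℝ Set.univ g) {x s y t a b : ℝ}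
    (hs : 0 < s) (ht : 0 < t) (ha : 0 ≤ a) (hb : 0 ≤ b) (hab : a + b = 1) :
    (a * s + b * t) * g ((a * x + b * y) / (a * s + b * t)) ≤
      a * (s * g (x / s)) + b * (t * g (y / t)) := by
  have hpos : 0 < a * s + b * t := by
    rcases ha.eq_or_lt with rfl | ha'
    · obtain rfl : b = 1 := by linarith
      simpa using ht
    · positivity
  have key := hg.2 (Set.mem_univ (x / s)) (Set.mem_univ (y / t))
    (show 0 ≤ a * s / (a * s + b * t) by positivity)
    (show 0 ≤ b * t / (a * s + b * t) by positivity) (by field_simp)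
  simp only [smul_eq_mul] at key
  have harg : a * s / (a * s + b * t) * (x / s) + b * t / (a * s + b * t) * (y / t) =
      (a * x + b * y) / (a * s + b * t) := by
    field_simp
  rw [harg] at key
  calc (a * s + b * t) * g ((a * x + b * y) / (a * s + b * t))
      ≤ (a * s + b * t) * (a * s / (a * s + b * t) * g (x / s) +
          b * t / (a * s + b * t) * g (y / t)) := mul_le_mul_of_nonneg_left key hpos.le
    _ = a * (s * g (x / s)) + b * (t * g (y / t)) := by field_simp

theorem convexOn_offloadingPower (B : ℝ) {N₀ : ℝ} (hN₀ : 0 ≤ N₀) :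
    ConvexOn ℝ Set.univ (fun x : ℝ => N₀ * ((2 : ℝ) ^ (x / B) - 1)) := by
  refine ⟨convex_univ, fun x _ y _ a b ha hb hab => ?_⟩
  have key := convexOn_exp.2 (Set.mem_univ (Real.log 2 * (x / B)))
    (Set.mem_univ (Real.log 2 * (y / B))) ha hb hab
  have harg : a * (Real.log 2 * (x / B)) + b * (Real.log 2 * (y / B)) =
      Real.log 2 * ((a * x + b * y) / B) := by ring
  simp only [smul_eq_mul, Real.rpow_def_of_pos (zero_lt_two' ℝ)] at key ⊢
  rw [harg] at key
  have hmul := mul_le_mul_of_nonneg_left key hN₀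
  linear_combination hmul + N₀ * hab

/-- The weighted sum mobile energy consumption
`∑ k, β k * ((t k / (h k)^2) * f (ℓ k / t k) + (R k - ℓ k) * C k * P k)`,
with `f x = N₀ * (2 ^ (x / B) - 1)`, is convex on the set where all `t k > 0`
(Lemma 1 of the paper: Problem P1 is convex). -/
theorem weighted_sum_energy_convex (K : ℕ) (hK : 1 ≤ K) (B N₀ : ℝ)
    (hB : 0 < B) (hN₀ : 0 < N₀) (β h C P R : Fin K → ℝ)
    (hβ : ∀ k, 0 < β k) (hh : ∀ k, 0 < h k) (hC : ∀ k, 0 ≤ C k)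
    (hP : ∀ k, 0 ≤ P k) (hR : ∀ k, 0 ≤ R k) :
    ConvexOn ℝ {p : (Fin K → ℝ) × (Fin K → ℝ) | ∀ k, 0 < p.2 k}
      (fun p : (Fin K → ℝ) × (Fin K → ℝ) =>
        ∑ k, β k * ((p.2 k / (h k) ^ 2) * (N₀ * ((2 : ℝ) ^ (p.1 k / p.2 k / B) - 1))
          + (R k - p.1 k) * C k * P k)) := by
  refine ⟨fun p hp q hq a b ha hb hab k => ?_, fun p hp q hq a b ha hb hab => ?_⟩
  · exact convex_Ioi (0 : ℝ) (hp k) (hq k) ha hb hab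
  · simp only [smul_eq_mul, Finset.mul_sum, ← Finset.sum_add_distrib]
    refine Finset.sum_le_sum fun k _ => ?_
    have key := (convexOn_offloadingPower B hN₀.le).perspective (x := p.1 k) (y := q.1 k)
      (hp k) (hq k) ha hb hab
    have hw : 0 ≤ β k * ((h k) ^ 2)⁻¹ := mul_nonneg (hβ k).le (by positivity)
    have hmul := mul_le_mul_of_nonneg_left key hw
    simp only [Prod.fst_add, Prod.snd_add, Prod.smul_fst, Prod.smul_snd, Pi.add_apply,
      Pi.smul_apply, smul_eq_mul, div_eq_mul_inv _ ((h k) ^ 2)]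
    -- `a + b = 1` is used to split the constant `R k` of the affine part between the two points.
    linear_combination hmul - β k * R k * C k * P k * hab
end

section
/- Let B > 0, N₀ > 0, β > 0, h > 0, C > 0 and P > 0 be real constants, define f(x) = N₀·(2^(x/B) − 1), g(x) = f(x) − x·(N₀·ln 2/B)·2^(x/B), and υ = B·C·P·h²/(N₀·ln 2). Suppose υ ≥ 1, and set φ = (β·N₀/h²)·(υ·ln υ − υ + 1) and x₀ = B·log₂(υ) (so that the derivative of f at x₀ equals C·P·h²). Then g(x₀) = −h²·φ/β, i.e. g(B·log₂ υ) = −N₀·(υ·ln υ − υ + 1). -/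
/-! At `x₀ = B * log₂ υ` the exponential `2 ^ (x₀ / B)` collapses to `υ`, since `υ > 0`, and
`x₀ * (N₀ * ln 2 / B) = N₀ * ln υ`. Hence `g x₀ = N₀ * (υ - 1) - N₀ * υ * ln υ`, which is
`-h² * φ / β` after cancelling `β` and `h²`. -/

open Real

/-- Lemma 3 of the paper: with `f x = N₀ * (2 ^ (x/B) - 1)`,
`g x = f x - x * (N₀ * ln 2 / B) * 2 ^ (x/B)` and `υ = B*C*P*h²/(N₀*ln 2) ≥ 1`,
setting `φ = (β*N₀/h²)*(υ*ln υ - υ + 1)` and `x₀ = B*log₂ υ`, one has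
`g x₀ = -h² * φ / β`, i.e. `g (B*log₂ υ) = -N₀*(υ*ln υ - υ + 1)`. -/
theorem offloading_priority_root (B N₀ β h C P : ℝ) (hB : 0 < B) (hN₀ : 0 < N₀)
    (hβ : 0 < β) (hh : 0 < h) (hC : 0 < C) (hP : 0 < P)
    (f g : ℝ → ℝ)
    (hf : ∀ x, f x = N₀ * ((2 : ℝ) ^ (x / B) - 1))
    (hg : ∀ x, g x = f x - x * (N₀ * Real.log 2 / B) * (2 : ℝ) ^ (x / B))
    (υ : ℝ) (hυdef : υ = B * C * P * h ^ 2 / (N₀ * Real.log 2)) (hυ : 1 ≤ υ)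
    (φ : ℝ) (hφ : φ = (β * N₀ / h ^ 2) * (υ * Real.log υ - υ + 1))
    (x₀ : ℝ) (hx₀ : x₀ = B * Real.logb 2 υ) :
    g x₀ = -(h ^ 2) * φ / β ∧ g (B * Real.logb 2 υ) = -N₀ * (υ * Real.log υ - υ + 1) := by
  have hlog2 : Real.log 2 ≠ 0 := (Real.log_pos one_lt_two).ne'
  have hpow : (2 : ℝ) ^ (B * Real.logb 2 υ / B) = υ := by
    rw [mul_div_cancel_left₀ _ hB.ne']
    exact Real.rpow_logb two_pos (by norm_num) (by linarith)
  have key : g (B * Real.logb 2 υ) = -N₀ * (υ * Real.log υ - υ + 1) := by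
    rw [hg, hf, hpow, Real.logb]
    field_simp
    ring
  refine ⟨?_, key⟩
  rw [hx₀, key, hφ]
  field_simp
end

section
/- Let B > 0, N₀ > 0, β > 0, C > 0 and P > 0 be real constants, and set a = B·C·P/(N₀·ln 2). For h > 0 define υ(h) = a·h² and φ(h) = (β·N₀/h²)·(υ(h)·ln υ(h) − υ(h) + 1). Then φ is strictly increasing on the interval [a^(−1/2), ∞), i.e. on the set of h > 0 for which υ(h) ≥ 1. -/
/-!
Substituting `υ = a * h ^ 2` turns the prefactor `β * N₀ / h ^ 2` into `β * N₀ * a / υ`, so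
`φ = β * N₀ * a * (log υ + 1 / υ - 1)`. As `υ` increases with `h > 0`, the claim reduces to the
monotonicity of `v ↦ log v + 1 / v` on `[1, ∞)`, which is `log_add_inv_strictMonoOn`.
-/

open Real Set

/-- The function `v ↦ log v + 1 / v` has derivative `(v - 1) / v ^ 2`, so it increases on `[1, ∞)`.
The proof avoids calculus: `log (u / v) < u / v - 1` gives
`log v - log u > (v - u) / v ≥ (v - u) / (u * v) = 1 / u - 1 / v`. -/
lemma log_add_inv_strictMonoOn : StrictMonoOn (fun v : ℝ => Real.log v + v⁻¹) (Set.Ici 1) := by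
  intro u hu v _ huv
  have hu1 : (1 : ℝ) ≤ u := hu
  have hu0 : 0 < u := by linarith
  have hv0 : 0 < v := by linarith
  have hne : u / v ≠ 1 := ((div_lt_one hv0).2 huv).ne
  have hlog := Real.log_lt_sub_one_of_pos (div_pos hu0 hv0) hne
  rw [Real.log_div hu0.ne' hv0.ne'] at hlog
  have hgap : (1 - u / v) - (u⁻¹ - v⁻¹) = (v - u) * (u - 1) / (u * v) := by
    field_simp
  have hnonneg : 0 ≤ (v - u) * (u - 1) / (u * v) :=
    div_nonneg (mul_nonneg (by linarith) (by linarith)) (by positivity)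
  show Real.log u + u⁻¹ < Real.log v + v⁻¹
  linarith

/-- Part of Lemma 4 of the paper: with `a = B*C*P/(N₀*ln 2)`, the offloading
priority `φ(h) = (β*N₀/h²)*(υ(h)*ln υ(h) - υ(h) + 1)`, where `υ(h) = a*h²`, is
strictly increasing in the channel gain `h` on `[a^(-1/2), ∞)`, i.e. where
`υ(h) ≥ 1`. -/
theorem priority_strictMono_in_channel (B N₀ β C P : ℝ) (hB : 0 < B)
    (hN₀ : 0 < N₀) (hβ : 0 < β) (hC : 0 < C) (hP : 0 < P)
    (a : ℝ) (ha : a = B * C * P / (N₀ * Real.log 2))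
    (υ φ : ℝ → ℝ)
    (hυ : ∀ h, υ h = a * h ^ 2)
    (hφ : ∀ h, φ h = (β * N₀ / h ^ 2) * (υ h * Real.log (υ h) - υ h + 1)) :
    StrictMonoOn φ (Set.Ici (a ^ (-(1 : ℝ) / 2))) := by
  have ha0 : 0 < a := by
    have := Real.log_pos one_lt_two
    rw [ha]
    positivity
  have hr0 : 0 < a ^ (-(1 : ℝ) / 2) := Real.rpow_pos_of_pos ha0 _
  have hr2 : a * (a ^ (-(1 : ℝ) / 2)) ^ 2 = 1 := by
    rw [← Real.rpow_natCast, ← Real.rpow_mul ha0.le]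
    norm_num [Real.rpow_neg_one, ha0.ne']
  have hform : ∀ h, 0 < h →
      φ h = β * N₀ * a * (Real.log (a * h ^ 2) + (a * h ^ 2)⁻¹ - 1) := by
    intro h hh
    rw [hφ, hυ]
    field_simp
    ring
  have hone : ∀ h, a ^ (-(1 : ℝ) / 2) ≤ h → 1 ≤ a * h ^ 2 := by
    intro h hh
    rw [← hr2]
    gcongr
  intro x hx y hy hxy
  have hx0 : 0 < x := hr0.trans_le hx
  have hy0 : 0 < y := hx0.trans hxy
  have hlt : a * x ^ 2 < a * y ^ 2 := by gcongr
  have hmono := log_add_inv_strictMonoOn (hone x hx) (hone y hy) hlt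
  rw [hform x hx0, hform y hy0]
  exact mul_lt_mul_of_pos_left (sub_lt_sub_right hmono 1) (by positivity)
end

section
/- Let K ≥ 1, let B > 0 and N₀ > 0, and define f(x) = N₀·(2^(x/B) − 1). For each k ∈ {1,…,K} let β_k > 0, h_k > 0, C_k ≥ 0, P_k ≥ 0 and R_k ≥ 0, and assume that for every k one has B·C_k·P_k·h_k² ≤ N₀·ln 2 (i.e. υ_k ≤ 1). Then for all real numbers ℓ_1,…,ℓ_K with 0 ≤ ℓ_k ≤ R_k and all t_1,…,t_K with t_k > 0, Σ_{k=1}^K β_k·[ (t_k/h_k²)·f(ℓ_k/t_k) + (R_k − ℓ_k)·C_k·P_k ] ≥ Σ_{k=1}^K β_k·R_k·C_k·P_k; that is, computing everything locally (no offloading) minimizes the weighted sum mobile energy consumption. -/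
/-!
The bound holds user by user. Since `2 ^ x - 1 ≥ x * log 2` (the tangent line at `0` of a convex
function), offloading `ℓ` bits costs at least `N₀ * log 2 / (B * h ^ 2)` per bit, whatever the
time `t` allotted to it; the hypothesis `υ_k ≤ 1` says that this marginal cost is at least the
local cost `C * P` per bit. So offloading never saves energy, and the weights `β k` are positive.
-/

open Finset

/-- Offloading `ℓ` bits in any positive time costs at least as much energy as computing them
locally, when the local cost per bit is at most the offloading cost per bit at zero rate. -/
theorem local_le_offload {B N₀ h c ℓ t : ℝ} (hB : 0 < B) (hN₀ : 0 < N₀) (hh : 0 < h)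
    (hl : 0 ≤ ℓ) (ht : 0 < t) (hc : B * c * h ^ 2 ≤ N₀ * Real.log 2) :
    ℓ * c ≤ (t / h ^ 2) * (N₀ * ((2 : ℝ) ^ (ℓ / t / B) - 1)) := by
  have tangent : Real.log 2 * (ℓ / t / B) ≤ (2 : ℝ) ^ (ℓ / t / B) - 1 := by
    rw [Real.rpow_def_of_pos two_pos]
    linarith [Real.add_one_le_exp (Real.log 2 * (ℓ / t / B))]
  calc ℓ * c = ℓ / (B * h ^ 2) * (B * c * h ^ 2) := by field_simp
    _ ≤ ℓ / (B * h ^ 2) * (N₀ * Real.log 2) := by gcongr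
    _ = (t / h ^ 2) * (N₀ * (Real.log 2 * (ℓ / t / B))) := by field_simp
    _ ≤ (t / h ^ 2) * (N₀ * ((2 : ℝ) ^ (ℓ / t / B) - 1)) := by gcongr

/-- Case 1) of Theorem 1 of the paper: if `υ_k = B*C_k*P_k*h_k²/(N₀*ln 2) ≤ 1`
for all users, then no offloading (computing everything locally) minimizes the
weighted sum mobile energy consumption. -/
theorem no_offloading_optimal (K : ℕ) (hK : 1 ≤ K) (B N₀ : ℝ) (hB : 0 < B)
    (hN₀ : 0 < N₀) (β h C P R : Fin K → ℝ)
    (hβ : ∀ k, 0 < β k) (hh : ∀ k, 0 < h k) (hC : ∀ k, 0 ≤ C k)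
    (hP : ∀ k, 0 ≤ P k) (hR : ∀ k, 0 ≤ R k)
    (hυ : ∀ k, B * C k * P k * (h k) ^ 2 ≤ N₀ * Real.log 2) :
    ∀ ℓ t : Fin K → ℝ, (∀ k, 0 ≤ ℓ k) → (∀ k, ℓ k ≤ R k) → (∀ k, 0 < t k) →
      ∑ k, β k * ((t k / (h k) ^ 2) * (N₀ * ((2 : ℝ) ^ (ℓ k / t k / B) - 1))
          + (R k - ℓ k) * C k * P k)
        ≥ ∑ k, β k * R k * C k * P k := by
  intro ℓ t hl _ ht
  refine Finset.sum_le_sum fun k _ => ?_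
  have key := local_le_offload (c := C k * P k) hB hN₀ (hh k) (hl k) (ht k)
    (by simpa only [mul_assoc] using hυ k)
  calc β k * R k * C k * P k = β k * (ℓ k * (C k * P k) + (R k - ℓ k) * C k * P k) := by ring
    _ ≤ _ := mul_le_mul_of_nonneg_left (by gcongr) (hβ k).le
end

section
/- Let B > 0 and N₀ > 0 be real constants and define g(x) = N₀·(1 − x·ln 2/B)·2^(x/B) − N₀. Then g is strictly decreasing (strictly antitone) on the interval [0, ∞). -/
/-!
With `u = x * log 2 / B` one has `g x = N₀ * ((1 - u) * exp u) - N₀`, and `u` is strictly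
increasing in `x`, so it suffices that `(1 - u) * exp u` is strictly decreasing on `[0, ∞)`.
For `v = u + d` with `d > 0`, dividing by `exp u` reduces this to
`(1 - d) * exp d - u * exp d < 1 - u`, which follows from `1 - d < exp (-d)` and `1 ≤ exp d`.
-/

open Real Set

lemma one_sub_mul_exp_strictAntiOn :
    StrictAntiOn (fun u : ℝ => (1 - u) * Real.exp u) (Set.Ici 0) := by
  intro u hu v _ huv
  have hu0 : 0 ≤ u := hu
  have hd : 0 < v - u := sub_pos.mpr huv
  have h1 : (1 - (v - u)) * Real.exp (v - u) < 1 := by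
    have h := Real.add_one_lt_exp (neg_ne_zero.mpr hd.ne')
    calc (1 - (v - u)) * Real.exp (v - u)
        < Real.exp (-(v - u)) * Real.exp (v - u) :=
          mul_lt_mul_of_pos_right (by linarith) (Real.exp_pos _)
      _ = 1 := by rw [← Real.exp_add, neg_add_cancel, Real.exp_zero]
  have h2 : u * 1 ≤ u * Real.exp (v - u) :=
    mul_le_mul_of_nonneg_left (Real.one_le_exp hd.le) hu0
  have h3 : (1 - v) * Real.exp (v - u) < 1 - u := by linarith
  calc (1 - v) * Real.exp v = (1 - v) * Real.exp (v - u) * Real.exp u := by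
        rw [mul_assoc, ← Real.exp_add, sub_add_cancel]
    _ < (1 - u) * Real.exp u := mul_lt_mul_of_pos_right h3 (Real.exp_pos u)

/-- Appendix Lemma 8 of the paper: `g x = N₀*(1 - x*ln 2/B)*2^(x/B) - N₀` is
strictly decreasing on `[0, ∞)`. -/
theorem g_strictAntiOn (B N₀ : ℝ) (hB : 0 < B) (hN₀ : 0 < N₀)
    (g : ℝ → ℝ)
    (hg : ∀ x, g x = N₀ * (1 - x * Real.log 2 / B) * (2 : ℝ) ^ (x / B) - N₀) :
    StrictAntiOn g (Set.Ici (0 : ℝ)) := by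
  have hlog : 0 < Real.log 2 := Real.log_pos one_lt_two
  have hg' : ∀ x, g x =
      N₀ * ((1 - x * Real.log 2 / B) * Real.exp (x * Real.log 2 / B)) - N₀ := by
    intro x
    rw [hg, Real.rpow_def_of_pos two_pos, mul_assoc,
      show Real.log 2 * (x / B) = x * Real.log 2 / B by ring]
  intro x hx y hy hxy
  have hx0 : 0 ≤ x := hx
  have hy0 : 0 ≤ y := hy
  have hu : 0 ≤ x * Real.log 2 / B := by positivity
  have hv : 0 ≤ y * Real.log 2 / B := by positivity
  have huv : x * Real.log 2 / B < y * Real.log 2 / B := by gcongr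
  rw [hg', hg']
  exact sub_lt_sub_right
    (mul_lt_mul_of_pos_left (one_sub_mul_exp_strictAntiOn hu hv huv) hN₀) N₀
end

section
/- Let B > 0 and N₀ > 0 be real constants and define g(x) = N₀·(1 − x·ln 2/B)·2^(x/B) − N₀. Then for every real y ≤ 0 there exists a unique x ≥ 0 such that g(x) = y. -/
/-!
In the variable `t = x * log 2 / B` the equation `g x = y` reads
`(1 - t) * exp t = 1 + y / N₀`. The function `t ↦ (1 - t) * exp t` has derivative `-t * exp t`,
so it decreases strictly on `[0, ∞)`, which gives uniqueness. It equals `1` at `t = 0`, and at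
`t = 1 + c` with `c ≥ 0` it is at most `-c`, so existence follows from the intermediate value
theorem.
-/

open Real

lemma strictAntiOn_one_sub_mul_exp :
    StrictAntiOn (fun t : ℝ => (1 - t) * exp t) (Set.Ici 0) := by
  refine strictAntiOn_of_deriv_neg (convex_Ici 0) (by fun_prop) fun t ht => ?_
  rw [interior_Ici, Set.mem_Ioi] at ht
  have hd : HasDerivAt (fun t : ℝ => (1 - t) * exp t) (-1 * exp t + (1 - t) * exp t) t :=
    ((hasDerivAt_id t).const_sub 1).mul (hasDerivAt_exp t)
  rw [hd.deriv]
  nlinarith [mul_pos ht (exp_pos t)]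

lemma exists_one_sub_mul_exp_eq {z : ℝ} (hz : z ≤ 1) :
    ∃ t : ℝ, 0 ≤ t ∧ (1 - t) * exp t = z := by
  -- At the right endpoint `1 + (1 - z)` the function is at most `-(1 - z) ≤ z`.
  have hivt := intermediate_value_Icc' (f := fun t : ℝ => (1 - t) * exp t)
    (show (0 : ℝ) ≤ 2 - z by linarith) (by fun_prop)
  have hexp : 1 ≤ exp (2 - z) := one_le_exp (by linarith)
  obtain ⟨t, ht, rfl⟩ := hivt (show z ∈ Set.Icc _ _ from
    ⟨by nlinarith [mul_nonneg (sub_nonneg.2 hz) (sub_nonneg.2 hexp)],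
      by simpa using hz⟩)
  exact ⟨t, ht.1, rfl⟩

/-- Appendix Lemma 7 of the paper (existence of the inverse `g⁻¹`): for
`g x = N₀*(1 - x*ln 2/B)*2^(x/B) - N₀` and every `y ≤ 0`, there is a unique
`x ≥ 0` with `g x = y`. -/
theorem g_inverse_exists_unique (B N₀ : ℝ) (hB : 0 < B) (hN₀ : 0 < N₀)
    (g : ℝ → ℝ)
    (hg : ∀ x, g x = N₀ * (1 - x * Real.log 2 / B) * (2 : ℝ) ^ (x / B) - N₀) :
    ∀ y : ℝ, y ≤ 0 → ∃! x : ℝ, 0 ≤ x ∧ g x = y := by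
  intro y hy
  have hlog : 0 < Real.log 2 := Real.log_pos one_lt_two
  have hg' : ∀ x, g x = N₀ * ((1 - x * Real.log 2 / B) * exp (x * Real.log 2 / B)) - N₀ := by
    intro x
    rw [hg, Real.rpow_def_of_pos two_pos, mul_assoc,
      show Real.log 2 * (x / B) = x * Real.log 2 / B by ring]
  obtain ⟨t, ht, hty⟩ := exists_one_sub_mul_exp_eq (z := 1 + y / N₀)
    (by linarith [div_nonpos_of_nonpos_of_nonneg hy hN₀.le])
  have hx : t * B / Real.log 2 * Real.log 2 / B = t := by field_simp
  have hgx : g (t * B / Real.log 2) = y := by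
    rw [hg', hx, hty]
    field_simp
    ring
  refine ⟨t * B / Real.log 2, ⟨by positivity, hgx⟩, ?_⟩
  rintro x ⟨hx0, hxy⟩
  have heq : (1 - x * Real.log 2 / B) * exp (x * Real.log 2 / B) = (1 - t) * exp t := by
    rw [← hgx, hg', hg', hx] at hxy
    exact mul_left_cancel₀ hN₀.ne' (sub_left_injective hxy)
  have hxt : x * Real.log 2 / B = t := strictAntiOn_one_sub_mul_exp.injOn
    (Set.mem_Ici.2 (by positivity)) (Set.mem_Ici.2 ht) heq
  rw [← hxt]
  field_simp
end

section
/- Let B > 0 and N₀ > 0 be real constants, define f(x) = N₀·(2^(x/B) − 1), and fix ℓ > 0. Then the function t ↦ t·f(ℓ/t) is strictly decreasing (strictly antitone) on the interval (0, ∞). -/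
/-!
For `0 < a < b`, the strict Bernoulli inequality `1 + p * s < (1 + s) ^ p` with exponent
`p = b / a > 1` and `s = 2 ^ (ℓ / b / B) - 1 > 0` compares the energies at times `a` and `b`,
because `(1 + s) ^ p = 2 ^ (ℓ / a / B)`. Multiplying by `a * N₀` gives the claim.
-/

open Real Set

/-- With `f x = N₀*(2^(x/B) - 1)` and a fixed amount of data `ℓ > 0`, the
transmission energy `t * f (ℓ/t)` is strictly decreasing in the transmission
time `t` on `(0, ∞)`. -/
theorem energy_strictAnti_in_time (B N₀ ℓ : ℝ) (hB : 0 < B) (hN₀ : 0 < N₀)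
    (hℓ : 0 < ℓ) :
    StrictAntiOn (fun t : ℝ => t * (N₀ * ((2 : ℝ) ^ (ℓ / t / B) - 1)))
      (Set.Ioi (0 : ℝ)) := by
  intro a ha b hb hab
  have ha : 0 < a := ha
  have hb : 0 < b := hb
  have hx : 0 < ℓ / b / B := by positivity
  have h1 : (1 : ℝ) < 2 ^ (ℓ / b / B) := Real.one_lt_rpow (by norm_num) hx
  have hp : 1 < b / a := (one_lt_div ha).mpr hab
  have key := one_add_mul_self_lt_rpow_one_add
    (s := (2 : ℝ) ^ (ℓ / b / B) - 1) (by linarith) (by linarith) hp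
  rw [add_sub_cancel, ← Real.rpow_mul (by norm_num),
    show ℓ / b / B * (b / a) = ℓ / a / B by field_simp] at key
  have h2 : b / a * ((2 : ℝ) ^ (ℓ / b / B) - 1) < 2 ^ (ℓ / a / B) - 1 := by linarith
  have h3 : b * ((2 : ℝ) ^ (ℓ / b / B) - 1) < a * (2 ^ (ℓ / a / B) - 1) := by
    rwa [div_mul_eq_mul_div, div_lt_iff₀' ha] at h2
  have h4 := mul_lt_mul_of_pos_left h3 hN₀
  show b * (N₀ * ((2 : ℝ) ^ (ℓ / b / B) - 1)) < a * (N₀ * ((2 : ℝ) ^ (ℓ / a / B) - 1))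
  linarith
end

section
/- Let B > 0, N₀ > 0, β > 0, h > 0, C > 0 and P > 0 be real constants, define f(x) = N₀·(2^(x/B) − 1), let υ = B·C·P·h²/(N₀·ln 2) and assume υ ≥ 1, and set φ = (β·N₀/h²)·(υ·ln υ − υ + 1). Then for every λ ≥ 0: the infimum over r > 0 of (β·f(r) + λ·h²)/(h²·r) is strictly less than β·C·P if and only if λ < φ. -/
/-!
With the normalized rate `t = r * log 2 / B`, one has `2 ^ (r / B) = exp t` and
`C * P * h ^ 2 * r = N₀ * υ * t`, so offloading at rate `r` costs less than `β * C * P` per bit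
iff `lam < (β * N₀ / h ^ 2) * (υ * t - exp t + 1)`. The concave function `υ * t - exp t + 1` has
its maximum `υ * log υ - υ + 1` at `t = log υ` (`mul_sub_exp_le`). Since the costs are bounded
below by `0`, the infimum is below `β * C * P` iff some cost is. The maximizer `log υ` is an
admissible (positive) rate unless `υ = 1`, in which case `φ = 0` and `lam < φ` is impossible.
-/

open Real Set

/-- The Fenchel–Young inequality for `exp`. -/
theorem mul_sub_exp_le {υ : ℝ} (hυ : 0 < υ) (t : ℝ) :
    υ * t - Real.exp t + 1 ≤ υ * Real.log υ - υ + 1 := by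
  have h1 := Real.add_one_le_exp (t - Real.log υ)
  rw [Real.exp_sub, Real.exp_log hυ, le_div_iff₀ hυ] at h1
  linarith

/-- Threshold structure of the optimal policy (Theorem 1 of the paper): for a
user with offloading priority `φ = (β*N₀/h²)*(υ*ln υ - υ + 1)`, `υ ≥ 1`, and a
time price `λ ≥ 0`, the minimal per-bit Lagrangian cost of offloading
`inf_{r>0} (β*f r + λ*h²)/(h²*r)` is strictly below the per-bit local computing
cost `β*C*P` iff `λ < φ`. -/
theorem threshold_structure (B N₀ β h C P : ℝ) (hB : 0 < B) (hN₀ : 0 < N₀)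
    (hβ : 0 < β) (hh : 0 < h) (hC : 0 < C) (hP : 0 < P)
    (f : ℝ → ℝ) (hf : ∀ x, f x = N₀ * ((2 : ℝ) ^ (x / B) - 1))
    (υ : ℝ) (hυdef : υ = B * C * P * h ^ 2 / (N₀ * Real.log 2)) (hυ : 1 ≤ υ)
    (φ : ℝ) (hφ : φ = (β * N₀ / h ^ 2) * (υ * Real.log υ - υ + 1)) :
    ∀ lam : ℝ, 0 ≤ lam →
      (sInf ((fun r : ℝ => (β * f r + lam * h ^ 2) / (h ^ 2 * r)) '' Set.Ioi 0)
          < β * C * P ↔ lam < φ) := by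
  intro lam hlam
  have hl2 : 0 < Real.log 2 := Real.log_pos one_lt_two
  have hυ0 : 0 < υ := by linarith
  have hK : 0 < β * N₀ / h ^ 2 := by positivity
  have hυN : N₀ * υ * Real.log 2 = B * (C * P * h ^ 2) := by
    rw [hυdef]
    field_simp
  have hcost : ∀ r : ℝ, 0 < r → ((β * f r + lam * h ^ 2) / (h ^ 2 * r) < β * C * P ↔
      lam < (β * N₀ / h ^ 2) *
        (υ * (r * Real.log 2 / B) - Real.exp (r * Real.log 2 / B) + 1)) := by
    intro r hr
    have hpow : (2 : ℝ) ^ (r / B) = Real.exp (r * Real.log 2 / B) := by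
      rw [Real.rpow_def_of_pos two_pos]
      congr 1
      ring
    have hlin : N₀ * (υ * (r * Real.log 2 / B)) = C * P * h ^ 2 * r := by
      field_simp
      linear_combination hυN
    rw [div_lt_iff₀ (by positivity), hf, hpow, div_mul_eq_mul_div, lt_div_iff₀ (by positivity)]
    generalize Real.exp (r * Real.log 2 / B) = E
    generalize υ * (r * Real.log 2 / B) = T at hlin ⊢
    have hT : β * N₀ * T = β * (C * P * h ^ 2 * r) := by rw [← hlin]; ring
    constructor <;> intro H <;> linarith
  have hbdd : BddBelow ((fun r : ℝ => (β * f r + lam * h ^ 2) / (h ^ 2 * r)) '' Set.Ioi 0) := by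
    refine ⟨0, ?_⟩
    rintro _ ⟨r, hr, rfl⟩
    have hr' : (0 : ℝ) < r := hr
    have hf0 : 0 ≤ f r := by
      rw [hf]
      exact mul_nonneg hN₀.le
        (sub_nonneg.2 (Real.one_le_rpow one_le_two (by positivity)))
    change 0 ≤ (β * f r + lam * h ^ 2) / (h ^ 2 * r)
    positivity
  rw [csInf_lt_iff hbdd (Set.nonempty_Ioi.image _), hφ]
  constructor
  · rintro ⟨_, ⟨r, hr, rfl⟩, hlt⟩
    exact ((hcost r hr).1 hlt).trans_le
      (mul_le_mul_of_nonneg_left (mul_sub_exp_le hυ0 _) hK.le)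
  · intro hlt
    have hυ1 : 1 < υ := by
      refine lt_of_le_of_ne hυ fun h1 => ?_
      rw [← h1] at hlt
      simp at hlt
      linarith
    have hlog : 0 < Real.log υ := Real.log_pos hυ1
    have hr : 0 < B * Real.log υ / Real.log 2 := by positivity
    refine ⟨_, ⟨B * Real.log υ / Real.log 2, hr, rfl⟩, (hcost _ hr).2 ?_⟩
    have ht : B * Real.log υ / Real.log 2 * Real.log 2 / B = Real.log υ := by
      field_simp
    rw [ht, Real.exp_log hυ0]
    exact hlt
end

section
/- Let B > 0, N₀ > 0, β > 0, h > 0 and λ > 0 be real constants, define f(x) = N₀·(2^(x/B) − 1), f'(x) = (N₀·ln 2/B)·2^(x/B) and g(x) = f(x) − x·f'(x). Then there exists a unique r* > 0 with g(r*) = −λ·h²/β, and for all r > 0 one has (β·f(r) + λ·h²)/(h²·r) ≥ β·f'(r*)/h², with equality when r = r*; in particular the infimum over r > 0 of (β·f(r) + λ·h²)/(h²·r) equals β·f'(r*)/h² and is attained at r*. -/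
open Real

/-!
The function `f` is strictly convex, so its graph lies strictly above each of its tangent lines,
and `g r` is the intercept at `0` of the tangent at `r`. If `g r' = -K` with `K = λ h² / β`, the
tangent at `r'` passes through `(0, -K)`, and the tangent inequality reads `f r + K ≥ r * f' r'`;
dividing by `r` gives the lower bound on the cost, with equality at `r'`. Two distinct positive
points with the same intercept would each have the strictly larger slope, which gives uniqueness.
Existence is the intermediate value theorem: `g 0 = 0`, and with `a = log 2 / B`,
`g x = N₀ (exp (a x) (1 - a x) - 1)` falls below `-K` once `a x = 1 + K / N₀`.
-/

/-- Strict tangent-line inequality for `x ↦ N (exp (a x) - 1)`. -/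
lemma tangent_lt {N a x y : ℝ} (hN : 0 < N) (ha : 0 < a) (hxy : y ≠ x) :
    N * (exp (a * x) - 1) + (y - x) * (N * a * exp (a * x)) < N * (exp (a * y) - 1) := by
  have h1 : a * (y - x) + 1 < exp (a * (y - x)) :=
    add_one_lt_exp (mul_ne_zero ha.ne' (sub_ne_zero.mpr hxy))
  have h2 : exp (a * y) = exp (a * x) * exp (a * (y - x)) := by
    rw [← exp_add]; ring_nf
  have h3 := mul_lt_mul_of_pos_left h1 (mul_pos hN (exp_pos (a * x)))
  rw [h2]
  linarith

/-- The tangent intercept of `x ↦ N (exp (a x) - 1)` takes every negative value on `(0, ∞)`. -/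
lemma exists_intercept {N a K : ℝ} (hN : 0 < N) (ha : 0 < a) (hK : 0 < K) :
    ∃ x, 0 < x ∧ N * (exp (a * x) - 1) - x * (N * a * exp (a * x)) = -K := by
  have hb : 0 < (1 + K / N) / a := by positivity
  have hc : ContinuousOn (fun x => N * (exp (a * x) - 1) - x * (N * a * exp (a * x)))
      (Set.Icc 0 ((1 + K / N) / a)) := by fun_prop
  have hend : N * (exp (a * ((1 + K / N) / a)) - 1)
      - (1 + K / N) / a * (N * a * exp (a * ((1 + K / N) / a))) ≤ -K := by
    rw [mul_div_cancel₀ _ ha.ne']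
    have h1 : 1 ≤ exp (1 + K / N) := one_le_exp (by positivity)
    have h2 : N * (exp (1 + K / N) - 1) - (1 + K / N) / a * (N * a * exp (1 + K / N))
        = -K * exp (1 + K / N) - N := by
      field_simp
      ring
    rw [h2]
    nlinarith
  obtain ⟨x, hx, hgx⟩ := intermediate_value_Icc' hb.le hc ⟨hend, by simpa using hK.le⟩
  refine ⟨x, lt_of_le_of_ne hx.1 ?_, hgx⟩
  rintro rfl
  simp at hgx
  exact hK.ne' hgx

/-- Stationarity condition of Theorem 1 of the paper: with
`f x = N₀*(2^(x/B) - 1)`, `f' x = (N₀*ln 2/B)*2^(x/B)` and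
`g x = f x - x * f' x`, there is a unique `r* > 0` with `g r* = -λ*h²/β`, the
per-bit Lagrangian cost `(β*f r + λ*h²)/(h²*r)` is at least `β*f'(r*)/h²` for
all `r > 0`, with equality at `r = r*`; in particular its infimum over `r > 0`
equals `β*f'(r*)/h²` and is attained at `r*`. -/
theorem stationarity_condition (B N₀ β h lam : ℝ) (hB : 0 < B) (hN₀ : 0 < N₀)
    (hβ : 0 < β) (hh : 0 < h) (hlam : 0 < lam)
    (f f' g : ℝ → ℝ)
    (hf : ∀ x, f x = N₀ * ((2 : ℝ) ^ (x / B) - 1))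
    (hf' : ∀ x, f' x = (N₀ * Real.log 2 / B) * (2 : ℝ) ^ (x / B))
    (hg : ∀ x, g x = f x - x * f' x) :
    ∃ r' : ℝ, (0 < r' ∧ g r' = -(lam * h ^ 2) / β) ∧
      (∀ r : ℝ, 0 < r ∧ g r = -(lam * h ^ 2) / β → r = r') ∧
      (∀ r : ℝ, 0 < r →
        (β * f r + lam * h ^ 2) / (h ^ 2 * r) ≥ β * f' r' / h ^ 2) ∧
      (β * f r' + lam * h ^ 2) / (h ^ 2 * r') = β * f' r' / h ^ 2 ∧
      IsLeast ((fun r : ℝ => (β * f r + lam * h ^ 2) / (h ^ 2 * r)) '' Set.Ioi 0)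
        (β * f' r' / h ^ 2) := by
  have ha : 0 < Real.log 2 / B := div_pos (Real.log_pos one_lt_two) hB
  have hpow : ∀ x : ℝ, (2 : ℝ) ^ (x / B) = exp (Real.log 2 / B * x) := fun x => by
    rw [rpow_def_of_pos two_pos]; ring_nf
  have hK : 0 < lam * h ^ 2 / β := by positivity
  have htan : ∀ x y, y ≠ x → f x + (y - x) * f' x < f y := fun x y hxy => by
    rw [hf, hf, hf', hpow, hpow, mul_div_assoc]
    exact tangent_lt hN₀ ha hxy
  obtain ⟨r, hr, hgr⟩ := exists_intercept hN₀ ha hK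
  have hgr' : g r = -(lam * h ^ 2 / β) := by
    rw [hg, hf, hf', hpow, mul_div_assoc]; exact hgr
  have hint : f r - r * f' r = -(lam * h ^ 2 / β) := by rw [← hg, hgr']
  have hβK : β * (lam * h ^ 2 / β) = lam * h ^ 2 := mul_div_cancel₀ _ hβ.ne'
  have hlow : ∀ s : ℝ, 0 < s →
      (β * f s + lam * h ^ 2) / (h ^ 2 * s) ≥ β * f' r / h ^ 2 := fun s hs => by
    have h1 : f r + (s - r) * f' r ≤ f s := by
      rcases eq_or_ne s r with rfl | hne
      · simp
      · exact (htan r s hne).le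
    have h2 : s * f' r ≤ f s + lam * h ^ 2 / β := by linarith
    have h3 := mul_le_mul_of_nonneg_left h2 hβ.le
    rw [ge_iff_le, div_le_div_iff₀ (by positivity) (by positivity), ← hβK]
    nlinarith [mul_le_mul_of_nonneg_left h3 (sq_nonneg h)]
  have heq : (β * f r + lam * h ^ 2) / (h ^ 2 * r) = β * f' r / h ^ 2 := by
    have h1 : β * f r + lam * h ^ 2 = β * f' r * r := by
      rw [← hβK]
      linear_combination β * hint
    rw [h1, mul_div_mul_right _ _ hr.ne']
  refine ⟨r, ⟨hr, by rw [hgr', neg_div]⟩, ?_, hlow, heq, ⟨r, hr, heq⟩, ?_⟩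
  · rintro s ⟨hs, hgs⟩
    by_contra hne
    have hints : f s - s * f' s = -(lam * h ^ 2 / β) := by rw [← hg, hgs, neg_div]
    -- Equal intercepts turn the two tangent inequalities into opposite comparisons of slopes.
    have h1 : s * f' r < s * f' s := by linarith [htan r s hne]
    have h2 : r * f' s < r * f' r := by linarith [htan s r (Ne.symm hne)]
    exact lt_asymm (lt_of_mul_lt_mul_left h1 hs.le) (lt_of_mul_lt_mul_left h2 hr.le)
  · rintro _ ⟨s, hs, rfl⟩
    exact hlow s hs
end

section
/- Let B > 0, N₀ > 0, β > 0, C > 0 and P > 0 be real constants and set a = B·C·P/(N₀·ln 2). For h > 0 define υ(h) = a·h² and φ(h) = (β·N₀/h²)·(υ(h)·ln υ(h) − υ(h) + 1). Then φ(h)/ln h tends to 2·β·B·C·P/ln 2 as h → ∞. -/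
/-!
Since `ln υ(h) = ln a + 2 ln h` for `h > 1`, dividing `φ(h)` by `ln h` gives
`2βN₀a + βN₀ (a ln a - a + h⁻²) / ln h`. The bracket converges and `1 / ln h → 0`, so the
limit is `2βN₀a`, which equals `2βBCP / ln 2` by the definition of `a`.
-/

open Real Filter

/-- Remark 1 of the paper: with `a = B*C*P/(N₀*ln 2)` and `υ(h) = a*h²`, the
offloading priority `φ(h) = (β*N₀/h²)*(υ(h)*ln υ(h) - υ(h) + 1)` scales as
`ln h` for large channel gain `h`; precisely, `φ(h)/ln h → 2*β*B*C*P/ln 2`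
as `h → ∞`. -/
theorem priority_scaling_in_channel (B N₀ β C P : ℝ) (hB : 0 < B)
    (hN₀ : 0 < N₀) (hβ : 0 < β) (hC : 0 < C) (hP : 0 < P)
    (a : ℝ) (ha : a = B * C * P / (N₀ * Real.log 2))
    (υ φ : ℝ → ℝ)
    (hυ : ∀ h, υ h = a * h ^ 2)
    (hφ : ∀ h, φ h = (β * N₀ / h ^ 2) * (υ h * Real.log (υ h) - υ h + 1)) :
    Filter.Tendsto (fun h : ℝ => φ h / Real.log h) Filter.atTop
      (nhds (2 * β * B * C * P / Real.log 2)) := by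
  have hlog2 : 0 < Real.log 2 := Real.log_pos one_lt_two
  have ha0 : 0 < a := by rw [ha]; positivity
  have hlim : 2 * β * B * C * P / Real.log 2 = 2 * β * N₀ * a := by
    rw [ha]; field_simp
  have hinvlog : Tendsto (fun h : ℝ => (Real.log h)⁻¹) atTop (nhds 0) :=
    tendsto_inv_atTop_zero.comp Real.tendsto_log_atTop
  have hinvsq : Tendsto (fun h : ℝ => (h ^ 2)⁻¹) atTop (nhds 0) :=
    tendsto_inv_atTop_zero.comp (tendsto_pow_atTop two_ne_zero)
  -- The expanded form of `φ(h) / ln h`, valid for `h > 1`.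
  have key : Tendsto (fun h : ℝ => 2 * β * N₀ * a +
      β * N₀ * (a * Real.log a - a + (h ^ 2)⁻¹) * (Real.log h)⁻¹) atTop
      (nhds (2 * β * N₀ * a + β * N₀ * (a * Real.log a - a + 0) * 0)) :=
    (((hinvsq.const_add _).const_mul _).mul hinvlog).const_add _
  rw [mul_zero, add_zero] at key
  rw [hlim]
  refine key.congr' ?_
  filter_upwards [eventually_gt_atTop 1] with h hh
  have hh0 : h ≠ 0 := by positivity
  have hlogh : Real.log h ≠ 0 := (Real.log_pos hh).ne'
  rw [hφ, hυ, Real.log_mul ha0.ne' (pow_ne_zero 2 hh0), Real.log_pow]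
  push_cast
  field_simp
  ring
end
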